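/- Let E be a real Banach space, N ≥ 0, K > 0. Let Z : [0,1] × [0,1] × E → E be a continuous map such that for all (s,t,x): the partial derivative ∂Z/∂t exists with ‖∂Z/∂t(s,t,x)‖ ≤ N, and Z(s,t,·) is differentiable in x with operator norm ‖D_x Z(s,t,x)‖ ≤ K. Suppose G : [0,1] × [0,1] × E → E is twice continuously differentiable and satisfies ∂G/∂s(s,t,x) = Z(s,t,G(s,t,x)) and G(0,t,x) = x for all t ∈ [0,1], x ∈ E. Then for all (s,t,x) ∈ [0,1] × [0,1] × E, ‖∂G/∂t(s,t,x)‖ ≤ (N/K)(exp(K s) − 1); in particular the family of vector fields V_{s,t} defined by V_{s,t}(G(s,t,x)) = ∂G/∂t(s,t,x) is uniformly bounded by (N/K)(exp(K) − 1). -/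

import Mathlib

open Set Real

/-!
Changing `t` to `t'` perturbs the vector field `Z(s,t,·)` by at most `N * |t' - t|`, so Grönwall's
inequality for approximate trajectories shows that `t ↦ G(s,t,x)` is Lipschitz with constant
`gronwallBound 0 K N s`, which therefore bounds its derivative. This comparison of nearby flows
replaces the linear ODE for `∂G/∂t`.
-/

open scoped NNReal Topology

section Derivatives

variable {𝕜 F : Type*} [NontriviallyNormedField 𝕜] [NormedAddCommGroup F] [NormedSpace 𝕜 F]

theorem norm_le_of_hasDerivWithinAt_of_dist_le {f : 𝕜 → F} {f' : F} {s : Set 𝕜} {x : 𝕜} {C : ℝ}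
    (hf : HasDerivWithinAt f f' s x) (hs : UniqueDiffWithinAt 𝕜 s x)
    (hC : ∀ᶠ y in 𝓝[s] x, dist (f y) (f x) ≤ C * dist y x) : ‖f'‖ ≤ C := by
  have : (𝓝[s \ {x}] x).NeBot :=
    accPt_principal_iff_nhdsWithin.1 (uniqueDiffWithinAt_iff_accPt.1 hs)
  refine le_of_tendsto (hasDerivWithinAt_iff_tendsto_slope.1 hf).norm ?_
  filter_upwards [hC.filter_mono (nhdsWithin_mono x sdiff_subset), self_mem_nhdsWithin]
    with y hy hyx
  have hpos : 0 < ‖y - x‖ := norm_pos_iff.2 (sub_ne_zero.2 hyx.2)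
  rw [slope_def_module, norm_smul, norm_inv, inv_mul_le_iff₀' hpos]
  simpa only [dist_eq_norm] using hy

end Derivatives

theorem lipschitzWith_of_nnnorm_hasFDerivAt_le {𝕜 E F : Type*} [RCLike 𝕜]
    [NormedAddCommGroup E] [NormedSpace 𝕜 E] [NormedAddCommGroup F] [NormedSpace 𝕜 F]
    {f : E → F} {f' : E → E →L[𝕜] F} {C : ℝ≥0} (hf : ∀ x, HasFDerivAt f (f' x) x)
    (hC : ∀ x, ‖f' x‖₊ ≤ C) : LipschitzWith C f :=
  lipschitzWith_of_nnnorm_fderiv_le (fun x => (hf x).differentiableAt)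
    fun x => (hf x).fderiv.symm ▸ hC x

theorem gronwallBound_mul (δ K ε c x : ℝ) :
    gronwallBound (δ * c) K (ε * c) x = gronwallBound δ K ε x * c := by
  unfold gronwallBound
  split_ifs <;> ring

section ParametricODE

variable {E : Type*} [NormedAddCommGroup E] [NormedSpace ℝ E] {a b : ℝ}

theorem hasDerivWithinAt_Ici_of_Icc {f : ℝ → E} {f' : E} {s : ℝ}
    (hf : HasDerivWithinAt f f' (Icc a b) s) (hs : s ∈ Ico a b) :
    HasDerivWithinAt f f' (Ici s) s :=
  hf.mono_of_mem_nhdsWithin <|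
    Filter.mem_of_superset (Icc_mem_nhdsGE hs.2) (Icc_subset_Icc_left hs.1)

theorem dist_le_gronwallBound_mul_dist {P : Type*} [PseudoMetricSpace P] {T : Set P}
    {v : ℝ → P → E → E} {γ : ℝ → P → E} {N K δ : ℝ≥0}
    (hvp : ∀ s ∈ Ico a b, ∀ x, LipschitzOnWith N (fun p => v s p x) T)
    (hvx : ∀ s ∈ Ico a b, ∀ p ∈ T, LipschitzWith K (v s p))
    (hγ : ∀ s ∈ Icc a b, ∀ p ∈ T,
      HasDerivWithinAt (fun s' => γ s' p) (v s p (γ s p)) (Icc a b) s)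
    (hγa : LipschitzOnWith δ (γ a) T)
    {s : ℝ} (hs : s ∈ Icc a b) {p q : P} (hp : p ∈ T) (hq : q ∈ T) :
    dist (γ s p) (γ s q) ≤ gronwallBound δ K N (s - a) * dist p q := by
  have hcont {r : P} (hr : r ∈ T) : ContinuousOn (fun s' => γ s' r) (Icc a b) :=
    fun s' hs' => (hγ s' hs' r hr).continuousWithinAt
  have hderiv {r : P} (hr : r ∈ T) (s' : ℝ) (hs' : s' ∈ Ico a b) :
      HasDerivWithinAt (fun s' => γ s' r) (v s' r (γ s' r)) (Ici s') s' :=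
    hasDerivWithinAt_Ici_of_Icc (hγ s' (Ico_subset_Icc_self hs') r hr) hs'
  -- `γ · p` is an approximate trajectory for the parameter `q`, with error `N * dist p q`.
  have hgronwall := dist_le_of_approx_trajectories_ODE_of_mem
    (fun s' hs' => (hvx s' hs' q hq).lipschitzOnWith (s := univ))
    (hcont hp) (hderiv hp) (fun s' hs' => (hvp s' hs' (γ s' p)).dist_le_mul p hp q hq)
    (fun _ _ => mem_univ _)
    (hcont hq) (hderiv hq) (fun _ _ => (dist_self _).le) (fun _ _ => mem_univ _)
    (hγa.dist_le_mul p hp q hq) s hs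
  rwa [add_zero, gronwallBound_mul] at hgronwall

theorem bounded_two_parameter_family_general {N K : ℝ≥0} {T : Set ℝ} (hT : UniqueDiffOn ℝ T)
    {Z : ℝ → ℝ → E → E}
    (hZt : ∀ s ∈ Icc a b, ∀ x, LipschitzOnWith N (fun t => Z s t x) T)
    (hZx : ∀ s ∈ Icc a b, ∀ t ∈ T, LipschitzWith K (Z s t))
    {G Gt : ℝ → ℝ → E → E}
    (hGs : ∀ s ∈ Icc a b, ∀ t ∈ T, ∀ x,
      HasDerivWithinAt (fun s' => G s' t x) (Z s t (G s t x)) (Icc a b) s)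
    (hGa : ∀ t ∈ T, ∀ x, G a t x = x)
    (hGt : ∀ s ∈ Icc a b, ∀ t ∈ T, ∀ x,
      HasDerivWithinAt (fun t' => G s t' x) (Gt s t x) T t) :
    ∀ s ∈ Icc a b, ∀ t ∈ T, ∀ x,
      ‖Gt s t x‖ ≤ gronwallBound 0 K N (s - a) ∧ ‖Gt s t x‖ ≤ gronwallBound 0 K N (b - a) := by
  intro s hs t ht x
  have hinit : LipschitzOnWith 0 (fun t' => G a t' x) T :=
    fun t ht t' ht' => by simp [hGa t ht, hGa t' ht']
  have hbound : ‖Gt s t x‖ ≤ gronwallBound 0 K N (s - a) := by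
    refine norm_le_of_hasDerivWithinAt_of_dist_le (hGt s hs t ht x) (hT t ht) ?_
    filter_upwards [self_mem_nhdsWithin] with t' ht'
    exact dist_le_gronwallBound_mul_dist (fun r hr => hZt r (Ico_subset_Icc_self hr))
      (fun r hr => hZx r (Ico_subset_Icc_self hr)) (fun r hr q hq => hGs r hr q hq x)
      hinit hs ht' ht
  exact ⟨hbound, hbound.trans <|
    gronwallBound_mono le_rfl N.coe_nonneg K.coe_nonneg (sub_le_sub_right hs.2 a)⟩

end ParametricODE

/-- Boundedness of the two-parameter family `V_{s,t}`: if
`G(s,t,x)` is the `s`-flow of `Z(s,t,·)` (i.e. `∂G/∂s = Z(s,t,G)`, `G(0,t,x) = x`),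
where `‖∂Z/∂t‖ ≤ N` and `‖D_x Z‖ ≤ K`, and `G` is `C²`, then
`‖∂G/∂t(s,t,x)‖ ≤ (N/K)(exp(K s) − 1)`, and in particular this `t`-derivative
family is uniformly bounded by `(N/K)(exp K − 1)`. -/
theorem bounded_two_parameter_family
    {E : Type*} [NormedAddCommGroup E] [NormedSpace ℝ E] [CompleteSpace E]
    (N K : ℝ) (hN : 0 ≤ N) (hK : 0 < K)
    (Z Zt : ℝ → ℝ → E → E) (DZ : ℝ → ℝ → E → (E →L[ℝ] E))
    (hZcont : ContinuousOn (fun p : ℝ × ℝ × E => Z p.1 p.2.1 p.2.2)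
      (Icc 0 1 ×ˢ Icc 0 1 ×ˢ univ))
    (hZt : ∀ s ∈ Icc (0:ℝ) 1, ∀ t ∈ Icc (0:ℝ) 1, ∀ x : E,
      HasDerivWithinAt (fun t' => Z s t' x) (Zt s t x) (Icc 0 1) t)
    (hZtbound : ∀ s ∈ Icc (0:ℝ) 1, ∀ t ∈ Icc (0:ℝ) 1, ∀ x : E, ‖Zt s t x‖ ≤ N)
    (hDZ : ∀ s ∈ Icc (0:ℝ) 1, ∀ t ∈ Icc (0:ℝ) 1, ∀ x : E,
      HasFDerivAt (fun y => Z s t y) (DZ s t x) x)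
    (hDZbound : ∀ s ∈ Icc (0:ℝ) 1, ∀ t ∈ Icc (0:ℝ) 1, ∀ x : E, ‖DZ s t x‖ ≤ K)
    (G Gt : ℝ → ℝ → E → E)
    (hG2 : ContDiffOn ℝ 2 (fun p : ℝ × ℝ × E => G p.1 p.2.1 p.2.2)
      (Icc 0 1 ×ˢ Icc 0 1 ×ˢ univ))
    (hGs : ∀ s ∈ Icc (0:ℝ) 1, ∀ t ∈ Icc (0:ℝ) 1, ∀ x : E,
      HasDerivWithinAt (fun s' => G s' t x) (Z s t (G s t x)) (Icc 0 1) s)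
    (hG0 : ∀ t ∈ Icc (0:ℝ) 1, ∀ x : E, G 0 t x = x)
    (hGt : ∀ s ∈ Icc (0:ℝ) 1, ∀ t ∈ Icc (0:ℝ) 1, ∀ x : E,
      HasDerivWithinAt (fun t' => G s t' x) (Gt s t x) (Icc 0 1) t) :
    ∀ s ∈ Icc (0:ℝ) 1, ∀ t ∈ Icc (0:ℝ) 1, ∀ x : E,
      ‖Gt s t x‖ ≤ (N / K) * (Real.exp (K * s) - 1) ∧
      ‖Gt s t x‖ ≤ (N / K) * (Real.exp K - 1) := by
  lift N to ℝ≥0 using hN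
  lift K to ℝ≥0 using hK.le
  simpa [gronwallBound_of_K_ne_0 hK.ne'] using
    bounded_two_parameter_family_general uniqueDiffOn_Icc_zero_one
      (fun s hs x => (convex_Icc 0 1).lipschitzOnWith_of_nnnorm_hasDerivWithin_le
        (fun t ht => hZt s hs t ht x) (fun t ht => hZtbound s hs t ht x))
      (fun s hs t ht => lipschitzWith_of_nnnorm_hasFDerivAt_le (hDZ s hs t ht) (hDZbound s hs t ht))
      hGs hG0 hGt
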